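/- arXiv:1212.4793 — 4 statements merged into one kernel-verified Lean document; each statement's English description precedes it below -/
import Mathlib

section
/- Let X, Y be sets, L, M complete lattices, f : X → Y, and φ : M → L with φ(⊤) = ⊤. Suppose q : (X → L) → (Y → M) is a right adjoint of the preimage operator p = (f,φ)^←, i.e. p and q form a Galois connection: p(b) ≤ u ⟺ b ≤ q(u) for all b : Y → M and u : X → L. If i_Y is an interior map on M^Y, then the initial operator î defined by î = p ∘ i_Y ∘ q is an interior map on L^X. -/
/-- The initial operator `î = (f,φ)^← ∘ i_Y ∘ (f,φ)_*` is an interior map. -/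
theorem initial_operator_is_interior_map
    {X Y L M : Type*} [CompleteLattice L] [CompleteLattice M]
    (f : X → Y) (φ : M → L) (hφ : φ ⊤ = ⊤)
    (q : (X → L) → (Y → M))
    (hgc : ∀ (b : Y → M) (u : X → L), φ ∘ b ∘ f ≤ u ↔ b ≤ q u)
    (iY : (Y → M) → (Y → M))
    (hY1 : ∀ v, iY v ≤ v) (hY2 : ∀ v w, v ≤ w → iY v ≤ iY w) (hY3 : iY ⊤ = ⊤) :
    (∀ u : X → L, φ ∘ iY (q u) ∘ f ≤ u) ∧
    (∀ u u' : X → L, u ≤ u' → φ ∘ iY (q u) ∘ f ≤ φ ∘ iY (q u') ∘ f) ∧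
    (φ ∘ iY (q (⊤ : X → L)) ∘ f = ⊤) := by
  have gc : GaloisConnection (fun b : Y → M => φ ∘ b ∘ f) q := hgc
  refine ⟨fun u => (hgc _ _).2 (hY1 _), fun u u' h => gc.monotone_l (hY2 _ _ (gc.monotone_u h)), ?_⟩
  rw [gc.u_top, hY3]
  funext x
  exact hφ
end

section
/- Let X, Y be sets, L, M complete lattices, f : X → Y, and φ : M → L. Suppose q : (X → L) → (Y → M) is a right adjoint of the preimage operator p = (f,φ)^← (Galois connection: p(b) ≤ u ⟺ b ≤ q(u)). Let i_Y be an interior map on M^Y and let î = p ∘ i_Y ∘ q be the initial operator on L^X. Then (f,φ) is fuzzy I-continuous from (X,L,î) to (Y,M,i_Y): for every v : Y → M, (f,φ)^←(i_Y v) ≤ î((f,φ)^← v). -/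
/-- With the initial operator `î = (f,φ)^← ∘ i_Y ∘ (f,φ)_*` on `L^X`, the morphism
`(f,φ)` is fuzzy I-continuous. -/
theorem initial_operator_continuous
    {X Y L M : Type*} [CompleteLattice L] [CompleteLattice M]
    (f : X → Y) (φ : M → L)
    (q : (X → L) → (Y → M))
    (hgc : ∀ (b : Y → M) (u : X → L), φ ∘ b ∘ f ≤ u ↔ b ≤ q u)
    (iY : (Y → M) → (Y → M))
    (hY1 : ∀ v, iY v ≤ v) (hY2 : ∀ v w, v ≤ w → iY v ≤ iY w) (hY3 : iY ⊤ = ⊤) :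
    ∀ v : Y → M, φ ∘ iY v ∘ f ≤ φ ∘ iY (q (φ ∘ v ∘ f)) ∘ f := by
  intro v
  have gc : GaloisConnection (fun b : Y → M => φ ∘ b ∘ f) q := hgc
  exact gc.monotone_l (hY2 _ _ (gc.le_u_l v))
end

section
/- Let X, Z be sets, L, N complete lattices, g : Z → X, and ρ : L → N a map preserving arbitrary infima, so that the preimage operator r = (g,ρ)^← : (X → L) → (Z → N), r(u) = ρ ∘ u ∘ g, preserves arbitrary pointwise infima. Let Λ be a nonempty index set and for each λ ∈ Λ let Y_λ be a set, M_λ a complete lattice, f_λ : X → Y_λ, φ_λ : M_λ → L, let q_λ be a right adjoint of the preimage operator p_λ = (f_λ,φ_λ)^← (Galois connection: p_λ(b) ≤ u ⟺ b ≤ q_λ(u)), let i_λ be an interior map on M_λ^{Y_λ}, and let î_λ = p_λ ∘ i_λ ∘ q_λ. Define ĩ(u) = ⨅_{λ ∈ Λ} î_λ(u). Let i_Z be an interior map on N^Z. If for every λ ∈ Λ the composite (f_λ ∘ g, ρ ∘ φ_λ) is fuzzy I-continuous from (Z,N,i_Z) to (Y_λ,M_λ,i_λ), i.e. r(p_λ(i_λ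 w)) ≤ i_Z(r(p_λ w)) for all w : Y_λ → M_λ, then (g,ρ) is fuzzy I-continuous from (Z,N,i_Z) to (X,L,ĩ): r(ĩ(u)) ≤ i_Z(r(u)) for all u : X → L. -/
/-- Initial lift of a structured source: if every composite `(f_λ ∘ g, ρ ∘ φ_λ)` is
fuzzy I-continuous, then `(g,ρ)` is fuzzy I-continuous into the meet `ĩ` of the
initial interior maps `î_λ = p_λ ∘ i_λ ∘ q_λ`. -/
theorem initial_lift_continuity
    {Z X L N : Type*} [CompleteLattice L] [CompleteLattice N]
    (g : Z → X) (ρ : L → N)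
    (hρ : ∀ s : Set L, ρ (sInf s) = sInf (ρ '' s))
    {Λ : Type*} [Nonempty Λ]
    (Y : Λ → Type*) (M : Λ → Type*) [∀ l, CompleteLattice (M l)]
    (f : ∀ l, X → Y l) (φ : ∀ l, M l → L)
    (q : ∀ l, (X → L) → (Y l → M l))
    (hgc : ∀ (l : Λ) (b : Y l → M l) (u : X → L),
      (φ l) ∘ b ∘ (f l) ≤ u ↔ b ≤ q l u)
    (i : ∀ l, (Y l → M l) → (Y l → M l))
    (hi1 : ∀ l v, i l v ≤ v)
    (hi2 : ∀ l v w, v ≤ w → i l v ≤ i l w)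
    (hi3 : ∀ l, i l ⊤ = ⊤)
    (iZ : (Z → N) → (Z → N))
    (hZ1 : ∀ v, iZ v ≤ v) (hZ2 : ∀ v w, v ≤ w → iZ v ≤ iZ w) (hZ3 : iZ ⊤ = ⊤)
    (hcont : ∀ (l : Λ) (w : Y l → M l),
      ρ ∘ ((φ l) ∘ (i l w) ∘ (f l)) ∘ g ≤ iZ (ρ ∘ ((φ l) ∘ w ∘ (f l)) ∘ g)) :
    ∀ u : X → L,
      ρ ∘ (⨅ l, (φ l) ∘ (i l (q l u)) ∘ (f l)) ∘ g ≤ iZ (ρ ∘ u ∘ g) := by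
  intro u
  have hm : Monotone ρ := by
    intro a b hab
    have h := hρ {a, b}
    rw [sInf_pair, Set.image_pair, sInf_pair, inf_eq_left.mpr hab] at h
    exact h ▸ inf_le_right
  obtain ⟨l⟩ := ‹Nonempty Λ›
  have h1 : (⨅ l, (φ l) ∘ (i l (q l u)) ∘ (f l)) ≤ (φ l) ∘ (i l (q l u)) ∘ (f l) :=
    iInf_le _ l
  refine le_trans (fun z => hm (h1 (g z))) (le_trans (hcont l (q l u)) (hZ2 _ _ ?_))
  exact fun z => hm (((hgc l (q l u) u).mpr le_rfl) (g z))
end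

section
/- Let X, Y be sets, L, M complete lattices, f : X → Y, and φ : M → L. Suppose q : (X → L) → (Y → M) is a right adjoint of the preimage operator p = (f,φ)^← (Galois connection: p(b) ≤ u ⟺ b ≤ q(u)). Let i_Y be an interior map on M^Y which is idempotent, i.e. i_Y(i_Y(v)) = i_Y(v) for all v : Y → M. Then the initial operator î = p ∘ i_Y ∘ q is idempotent: î(î(u)) = î(u) for all u : X → L. -/
/-- If `i_Y` is an idempotent interior map, then the initial operator
`î = p ∘ i_Y ∘ q` is idempotent. -/
theorem initial_operator_idempotent
    {X Y L M : Type*} [CompleteLattice L] [CompleteLattice M]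
    (f : X → Y) (φ : M → L)
    (q : (X → L) → (Y → M))
    (hgc : ∀ (b : Y → M) (u : X → L), φ ∘ b ∘ f ≤ u ↔ b ≤ q u)
    (iY : (Y → M) → (Y → M))
    (hY1 : ∀ v, iY v ≤ v) (hY2 : ∀ v w, v ≤ w → iY v ≤ iY w) (hY3 : iY ⊤ = ⊤)
    (hidem : ∀ v, iY (iY v) = iY v) :
    ∀ u : X → L,
      φ ∘ iY (q (φ ∘ iY (q u) ∘ f)) ∘ f = φ ∘ iY (q u) ∘ f := by
  intro u
  apply le_antisymm
  · exact (hgc _ _).2 (hY1 _)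
  · refine (hgc _ _).2 ?_
    have h1 : iY (q u) ≤ iY (q (φ ∘ iY (q u) ∘ f)) := by
      have h := hY2 _ _ ((hgc (iY (q u)) _).1 le_rfl)
      rwa [hidem] at h
    exact h1.trans ((hgc _ _).1 le_rfl)
end
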